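/- Let Γ be a terminal DG game and let v ∈ V_i be a non-terminal position with N⁺(v) ⊆ T, and let a ∈ N⁺(v) be the ≻_i-best element of N⁺(v). Let Γ' be the DG game obtained from Γ by deleting all moves (v,b) with b ∈ N⁺(v), b ≠ a. Then every terminal Nash equilibrium of Γ' is also a terminal Nash equilibrium of Γ. -/

import Mathlib

/-!
Deleting the moves from `v` other than `(v, a)` changes neither the terminals nor the outcome of any
situation; only fewer situations remain, namely those choosing `a` at `v`. Suppose a player gains by
deviating in `Γ` from an equilibrium of `Γ'`. If he does not own `v`, the deviation is available in
`Γ'` as well. If he owns `v`, redirect it at `v` to `a`: either the play avoids `v` and its outcome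
is the same, or it ends one move after its first visit to `v`, now at `a` instead of at another
out-neighbour of `v`, which is no worse for him. Either way he already gains in `Γ'`.
-/

open Classical

/-- A deterministic graphical (DG) game on vertex (position) set `V` with player set `ι`.
`adj` is the move relation of the digraph; terminals are exactly the vertices of
out-degree `0`.  `owner x` is the player controlling position `x` (irrelevant for
terminals), `init` is the initial position, and `pref i x y` means that player `i`
strictly prefers outcome `x` to outcome `y`, where outcomes are encoded as
`Option V`: `some t` for a terminal `t` and `none` for the infinite outcome `∞`. -/
structure DGGame (V : Type*) (ι : Type*) where
  adj : V → V → Prop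
  owner : V → ι
  init : V
  pref : ι → Option V → Option V → Prop

namespace DGGame

variable {V ι : Type*} (Γ : DGGame V ι)

/-- A terminal position: no outgoing moves. -/
def Terminal (x : V) : Prop := ∀ y, ¬ Γ.adj x y

/-- The set of outcomes `A = T ∪ {∞}`. -/
def OutcomeSet : Set (Option V) := {x | x = none ∨ ∃ t, Γ.Terminal t ∧ x = some t}

/-- The preferences of each player form a strict linear order on the outcome set. -/
def PrefOrder : Prop :=
  ∀ i : ι,
    (∀ x ∈ Γ.OutcomeSet, ¬ Γ.pref i x x) ∧
    (∀ x ∈ Γ.OutcomeSet, ∀ y ∈ Γ.OutcomeSet, ∀ z ∈ Γ.OutcomeSet,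
        Γ.pref i x y → Γ.pref i y z → Γ.pref i x z) ∧
    (∀ x ∈ Γ.OutcomeSet, ∀ y ∈ Γ.OutcomeSet, x ≠ y → Γ.pref i x y ∨ Γ.pref i y x)

/-- One step of the play determined by a situation `σ` (stays put at terminals). -/
noncomputable def step (σ : V → V) (x : V) : V :=
  if Γ.Terminal x then x else σ x

/-- The position reached after `n` moves of the play starting at the initial position. -/
noncomputable def iter (σ : V → V) (n : ℕ) : V := (Γ.step σ)^[n] Γ.init

/-- The outcome `g(σ)` of a situation: the terminal at which the play from the initial
position ends, or `none` (i.e. `∞`) if the play is infinite. -/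
noncomputable def outcome (σ : V → V) : Option V :=
  if h : ∃ n, Γ.Terminal (Γ.iter σ n) then some (Γ.iter σ (Nat.find h)) else none

/-- A situation: a choice, for every non-terminal position, of a move from it.
(Values at terminal positions are irrelevant.) -/
def IsSituation (σ : V → V) : Prop := ∀ x, ¬ Γ.Terminal x → Γ.adj x (σ x)

/-- Nash equilibrium in pure stationary strategies: no player `i` can obtain a strictly
better outcome by changing his own moves only. -/
def IsNE (σ : V → V) : Prop :=
  Γ.IsSituation σ ∧
  ∀ (i : ι) (σ' : V → V), Γ.IsSituation σ' →
    (∀ x, Γ.owner x ≠ i → σ' x = σ x) →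
    ¬ Γ.pref i (Γ.outcome σ') (Γ.outcome σ)

/-- A terminal Nash equilibrium: a NE whose outcome is a terminal. -/
def IsTerminalNE (σ : V → V) : Prop := Γ.IsNE σ ∧ ∃ t, Γ.outcome σ = some t

/-- A non-terminal Nash equilibrium: a NE whose outcome is `∞`. -/
def IsNonterminalNE (σ : V → V) : Prop := Γ.IsNE σ ∧ Γ.outcome σ = none

/-- A terminal DG game: every player prefers every terminal outcome to `∞`. -/
def TerminalGame : Prop := ∀ (i : ι) (t : V), Γ.Terminal t → Γ.pref i (some t) none

/-- A play-once DG game: every player controls exactly one position. -/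
def PlayOnce : Prop := ∀ i : ι, {x | ¬ Γ.Terminal x ∧ Γ.owner x = i}.ncard = 1

/-- Reachability by a directed path. -/
def Reaches (x y : V) : Prop := Relation.ReflTransGen Γ.adj x y

end DGGame

namespace DGGame

variable {V ι : Type*} {Γ : DGGame V ι} {σ τ : V → V} {v a : V}

lemma step_of_terminal {x : V} (hx : Γ.Terminal x) : Γ.step σ x = x := if_pos hx

lemma step_of_not_terminal {x : V} (hx : ¬ Γ.Terminal x) : Γ.step σ x = σ x := if_neg hx

lemma iter_succ (n : ℕ) : Γ.iter σ (n + 1) = Γ.step σ (Γ.iter σ n) :=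
  Function.iterate_succ_apply' _ _ _

lemma iter_eq_of_terminal_of_le {m n : ℕ} (hm : Γ.Terminal (Γ.iter σ m)) (hmn : m ≤ n) :
    Γ.iter σ n = Γ.iter σ m := by
  obtain ⟨k, rfl⟩ := Nat.exists_eq_add_of_le' hmn
  rw [iter, Function.iterate_add_apply]
  exact Function.iterate_fixed (step_of_terminal hm) k

lemma outcome_eq_some_iff {t : V} :
    Γ.outcome σ = some t ↔ Γ.Terminal t ∧ ∃ n, Γ.iter σ n = t := by
  constructor
  · intro h
    by_cases hex : ∃ n, Γ.Terminal (Γ.iter σ n)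
    · rw [outcome, dif_pos hex, Option.some_inj] at h
      exact ⟨h ▸ Nat.find_spec hex, _, h⟩
    · rw [outcome, dif_neg hex] at h
      contradiction
  · rintro ⟨ht, n, rfl⟩
    have hex : ∃ n, Γ.Terminal (Γ.iter σ n) := ⟨n, ht⟩
    rw [outcome, dif_pos hex,
      iter_eq_of_terminal_of_le (Nat.find_spec hex) (Nat.find_min' hex ht)]

lemma outcome_mem_outcomeSet : Γ.outcome σ ∈ Γ.OutcomeSet := by
  cases h : Γ.outcome σ with
  | none => exact Or.inl rfl
  | some t => exact Or.inr ⟨t, (outcome_eq_some_iff.1 h).1, rfl⟩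

lemma outcome_congr {Δ : DGGame V ι} (hterm : ∀ x, Γ.Terminal x ↔ Δ.Terminal x)
    (hiter : ∀ n, Γ.iter σ n = Δ.iter τ n) : Γ.outcome σ = Δ.outcome τ :=
  Option.ext fun t => by simp only [outcome_eq_some_iff, hterm, hiter]

lemma outcome_eq_some_of_iter_eq {n : ℕ} (hn : Γ.iter σ n = v) (hv : ¬ Γ.Terminal v)
    (hσv : Γ.Terminal (σ v)) : Γ.outcome σ = some (σ v) :=
  outcome_eq_some_iff.2 ⟨hσv, n + 1, by rw [iter_succ, hn, step_of_not_terminal hv]⟩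

lemma iter_update {n : ℕ} (h : ∀ k < n, Γ.iter σ k ≠ v) :
    Γ.iter (Function.update σ v a) n = Γ.iter σ n := by
  induction n with
  | zero => rfl
  | succ n ih =>
    rw [iter_succ, iter_succ, ih fun k hk => h k (hk.trans n.lt_succ_self), step, step,
      Function.update_of_ne (h n n.lt_succ_self)]

lemma outcome_update_of_forall_iter_ne (h : ∀ n, Γ.iter σ n ≠ v) :
    Γ.outcome (Function.update σ v a) = Γ.outcome σ :=
  outcome_congr (fun _ => Iff.rfl) fun _ => iter_update fun k _ => h k

lemma exists_iter_update_eq (h : ∃ n, Γ.iter σ n = v) :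
    ∃ n, Γ.iter (Function.update σ v a) n = v :=
  ⟨Nat.find h, (iter_update fun _ => Nat.find_min h).trans (Nat.find_spec h)⟩

lemma IsSituation.update (hσ : Γ.IsSituation σ) (ha : Γ.adj v a) :
    Γ.IsSituation (Function.update σ v a) := by
  intro x hx
  obtain rfl | hxv := eq_or_ne x v
  · rwa [Function.update_self]
  · rw [Function.update_of_ne hxv]
    exact hσ x hx

/-- Weak preference: player `i` strictly prefers `x` to every outcome to which he strictly prefers
`y`. If his preference is a strict linear order, this means that `x` is at least as good as `y`;
phrased this way, it is meaningful for an arbitrary relation `Γ.pref i`. -/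
def WeakPref (Γ : DGGame V ι) (i : ι) (x y : Option V) : Prop :=
  ∀ z ∈ Γ.OutcomeSet, Γ.pref i y z → Γ.pref i x z

lemma PrefOrder.weakPref (hpref : Γ.PrefOrder) {i : ι} {x y : Option V}
    (hx : x ∈ Γ.OutcomeSet) (hy : y ∈ Γ.OutcomeSet) (h : y ≠ x → Γ.pref i x y) :
    Γ.WeakPref i x y := by
  intro z hz hyz
  obtain rfl | hne := eq_or_ne y x
  · exact hyz
  · exact (hpref i).2.1 x hx y hy z hz (h hne) hyz

lemma PrefOrder.weakPref_some (hpref : Γ.PrefOrder) {i : ι} {s t : V} (hs : Γ.Terminal s)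
    (ht : Γ.Terminal t) (h : t ≠ s → Γ.pref i (some s) (some t)) :
    Γ.WeakPref i (some s) (some t) :=
  hpref.weakPref (Or.inr ⟨s, hs, rfl⟩) (Or.inr ⟨t, ht, rfl⟩) fun hne => h (ne_of_apply_ne some hne)

lemma weakPref_outcome_update {i : ι} (hv : ¬ Γ.Terminal v) (hσv : Γ.Terminal (σ v))
    (ha : Γ.Terminal a) (hpref : Γ.WeakPref i (some a) (some (σ v))) :
    Γ.WeakPref i (Γ.outcome (Function.update σ v a)) (Γ.outcome σ) := by
  by_cases hvisit : ∃ n, Γ.iter σ n = v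
  · obtain ⟨m, hm⟩ := hvisit
    obtain ⟨n, hn⟩ := exists_iter_update_eq (a := a) ⟨m, hm⟩
    have hout : Γ.outcome (Function.update σ v a) = some a := by
      simpa only [Function.update_self] using
        outcome_eq_some_of_iter_eq hn hv (by rwa [Function.update_self])
    rwa [hout, outcome_eq_some_of_iter_eq hm hv hσv]
  · rw [outcome_update_of_forall_iter_ne (not_exists.1 hvisit)]
    exact fun _ _ => id

/-- The game obtained from `Γ` by deleting all moves from `v` except `(v, a)`. It is of interest
only if `(v, a)` is a move of `Γ`: otherwise `v` becomes a terminal. -/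
def fixMove (Γ : DGGame V ι) (v a : V) : DGGame V ι :=
  { Γ with adj := fun x y => Γ.adj x y ∧ (x = v → y = a) }

lemma terminal_fixMove_iff (ha : Γ.adj v a) {x : V} :
    (Γ.fixMove v a).Terminal x ↔ Γ.Terminal x := by
  refine ⟨fun h y hxy => ?_, fun h y hxy => h y hxy.1⟩
  obtain rfl | hxv := eq_or_ne x v
  · exact h a ⟨ha, fun _ => rfl⟩
  · exact h y ⟨hxy, fun hx => absurd hx hxv⟩

lemma outcome_fixMove (ha : Γ.adj v a) : (Γ.fixMove v a).outcome σ = Γ.outcome σ := by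
  have hstep : (Γ.fixMove v a).step σ = Γ.step σ :=
    funext fun x => by simp only [step, terminal_fixMove_iff ha]
  exact outcome_congr (fun _ => terminal_fixMove_iff ha) fun n => by rw [iter, hstep]; rfl

lemma isSituation_fixMove_iff (ha : Γ.adj v a) :
    (Γ.fixMove v a).IsSituation σ ↔ Γ.IsSituation σ ∧ σ v = a := by
  simp only [IsSituation, terminal_fixMove_iff ha]
  refine ⟨fun h => ⟨fun x hx => (h x hx).1, (h v fun hv => hv a ha).2 rfl⟩, ?_⟩
  rintro ⟨hσ, hσv⟩ x hx
  exact ⟨hσ x hx, fun hxv => hxv ▸ hσv⟩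

lemma isNE_fixMove_iff (ha : Γ.adj v a) :
    (Γ.fixMove v a).IsNE σ ↔ (Γ.IsSituation σ ∧ σ v = a) ∧
      ∀ i σ', Γ.IsSituation σ' → σ' v = a → (∀ x, Γ.owner x ≠ i → σ' x = σ x) →
        ¬ Γ.pref i (Γ.outcome σ') (Γ.outcome σ) := by
  simp only [IsNE, isSituation_fixMove_iff ha, outcome_fixMove ha, and_imp]
  rfl

end DGGame

open DGGame in
theorem stmt7_general {V ι : Type*} {Γ : DGGame V ι} {v a : V} (ha : Γ.adj v a)
    (hallT : ∀ b, Γ.adj v b → Γ.Terminal b)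
    (hbest : ∀ b, Γ.adj v b → Γ.WeakPref (Γ.owner v) (some a) (some b))
    {σ : V → V} (hNE : (Γ.fixMove v a).IsNE σ) : Γ.IsNE σ := by
  obtain ⟨⟨hσ, hσv⟩, hstable⟩ := (isNE_fixMove_iff ha).1 hNE
  refine ⟨hσ, fun j σ' hσ' hdev hgain => ?_⟩
  obtain rfl | hj := eq_or_ne (Γ.owner v) j
  · have hv : ¬ Γ.Terminal v := fun hv => hv a ha
    have hmove : Γ.adj v (σ' v) := hσ' v hv
    have hweak : Γ.WeakPref (Γ.owner v) (Γ.outcome (Function.update σ' v a)) (Γ.outcome σ') :=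
      weakPref_outcome_update hv (hallT _ hmove) (hallT a ha) (hbest _ hmove)
    refine hstable _ (Function.update σ' v a) (hσ'.update ha) (Function.update_self ..)
      (fun x hx => ?_) (hweak _ outcome_mem_outcomeSet hgain)
    rw [Function.update_of_ne (ne_of_apply_ne Γ.owner hx), hdev x hx]
  · exact hstable j σ' hσ' ((hdev v hj).trans hσv) hdev hgain

/-- Let `Γ` be a terminal DG game, `v ∈ V_i` a non-terminal position all of whose
out-neighbours are terminals, and `a ∈ N⁺(v)` the `≻ᵢ`-best element of `N⁺(v)`.
Let `Γ'` be obtained from `Γ` by deleting all moves `(v,b)` with `b ∈ N⁺(v)`,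
`b ≠ a`.  Then every terminal Nash equilibrium of `Γ'` is also a terminal
Nash equilibrium of `Γ`. -/
theorem stmt7 {V ι : Type*} [Finite V] (Γ : DGGame V ι)
    (hinit : ¬ Γ.Terminal Γ.init) (hpref : Γ.PrefOrder)
    (hterm : Γ.TerminalGame)
    (v : V) (i : ι) (hvi : Γ.owner v = i) (hvnt : ¬ Γ.Terminal v)
    (hallT : ∀ u, Γ.adj v u → Γ.Terminal u)
    (a : V) (ha : Γ.adj v a)
    (hbest : ∀ b, Γ.adj v b → b ≠ a → Γ.pref i (some a) (some b))
    (Γ' : DGGame V ι)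
    (hΓ' : Γ' = { Γ with adj := fun x y => Γ.adj x y ∧ (x = v → y = a) }) :
    ∀ σ : V → V, Γ'.IsTerminalNE σ → Γ.IsTerminalNE σ := by
  subst hvi hΓ'
  rintro σ ⟨hNE, hout⟩
  exact ⟨stmt7_general ha hallT (fun b hb => hpref.weakPref_some (hallT a ha) (hallT b hb)
    (hbest b hb)) hNE, DGGame.outcome_fixMove ha ▸ hout⟩
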